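/- Let 𝒳, 𝒴 be Polish spaces, μ ∈ 𝒫(𝒳), ν ∈ 𝒫(𝒴). (i) Let X, Y be random variables on a probability space with filtration (ℱ_t)_{t=1}^2 such that X is ℱ₁-measurable, Y is ℱ₂-measurable, X ∼ μ and Y ∼ ν. Then the law P^X of (X, ℒ(Y|ℱ₁)) belongs to Λ(μ,ν) and satisfies E[F(X, ℒ(Y|ℱ₁))] = ∫ F(x,p) P^X(dx,dp) for every measurable F : 𝒳 × 𝒫(𝒴) → ℝ̄ for which the left-hand side is well-defined. (ii) Conversely, for every P ∈ Λ(μ,ν) there exists a filtered probability space carrying random variables X ∼ μ (ℱ₁-measurable) and Y ∼ ν such that the law of (X, ℒ(Y|ℱ₁)) equals P. -/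

import Mathlib

open MeasureTheory Set Filter
open scoped ENNReal NNReal Topology RealInnerProductSpace

noncomputable section

namespace WOT

/-- The set of couplings of `μ` and `ν`. -/
def Couplings {X Y : Type*} [MeasurableSpace X] [MeasurableSpace Y]
    (μ : Measure X) (ν : Measure Y) : Set (Measure (X × Y)) :=
  {π | π.map Prod.fst = μ ∧ π.map Prod.snd = ν}

/-- `K` is a disintegration of `π` with respect to its first marginal `μ`. -/
def IsDisint {X Y : Type*} [MeasurableSpace X] [MeasurableSpace Y]
    (π : Measure (X × Y)) (μ : Measure X) (K : X → Measure Y) : Prop :=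
  Measurable K ∧ (∀ x, IsProbabilityMeasure (K x)) ∧
    ∀ s : Set (X × Y), MeasurableSet s → π s = ∫⁻ x, K x (Prod.mk x ⁻¹' s) ∂μ

/-- The intensity `I(Q)` of a measure on measures. -/
def intensity {Y : Type*} [MeasurableSpace Y] (Q : Measure (Measure Y)) : Measure Y :=
  Q.join

/-- The intensity map `Î`. -/
def intensityHat {X Y : Type*} [MeasurableSpace X] [MeasurableSpace Y]
    (P : Measure (X × Measure Y)) : Measure (X × Y) :=
  P.bind fun xp => (Measure.dirac xp.1).prod xp.2

/-- `Λ(μ,ν)`, the set of probability measures on `X × 𝒫(Y)` whose intensity is a coupling. -/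
def Lambda {X Y : Type*} [MeasurableSpace X] [MeasurableSpace Y]
    (μ : Measure X) (ν : Measure Y) : Set (Measure (X × Measure Y)) :=
  {P | IsProbabilityMeasure P ∧ (∀ᵐ xp ∂P, IsProbabilityMeasure xp.2) ∧
    intensityHat P ∈ Couplings μ ν}

/-- Finite `r`-th moment. -/
def FinMom {X : Type*} [MeasurableSpace X] [PseudoMetricSpace X]
    (r : ℝ) (x₀ : X) (μ : Measure X) : Prop :=
  ∫⁻ x, ENNReal.ofReal (dist x x₀ ^ r) ∂μ < ⊤

/-- The growth class `Φ_r`. -/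
def PhiR {X : Type*} [PseudoMetricSpace X] (r : ℝ) (x₀ : X) : Set (X → ℝ) :=
  {φ | Continuous φ ∧ ∃ K : ℝ, ∀ x, |φ x| ≤ K * (1 + dist x x₀ ^ r)}

/-- The `r`-Wasserstein distance (valued in `ℝ≥0∞`). -/
def Wr {Y : Type*} [MeasurableSpace Y] [PseudoMetricSpace Y]
    (r : ℝ) (p q : Measure Y) : ℝ≥0∞ :=
  ⨅ π ∈ Couplings p q, (∫⁻ z : Y × Y, ENNReal.ofReal (dist z.1 z.2 ^ r) ∂π) ^ (1 / r)

/-- `𝒫_r(Y)`: probability measures with finite `r`-th moment. -/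
def Pr {Y : Type*} [MeasurableSpace Y] [PseudoMetricSpace Y] (r : ℝ) (y₀ : Y) :
    Set (Measure Y) :=
  {p | IsProbabilityMeasure p ∧ FinMom r y₀ p}

/-- `𝒫_r(𝒫_r(Y))`: probability measures on `𝒫_r(Y)` with finite `r`-th moment w.r.t. `𝒲_r`. -/
def PrP {Y : Type*} [MeasurableSpace Y] [PseudoMetricSpace Y] (r : ℝ) (y₀ : Y) :
    Set (Measure (Measure Y)) :=
  {Q | IsProbabilityMeasure Q ∧ (∀ᵐ p ∂Q, p ∈ Pr r y₀) ∧
    ∫⁻ p, Wr r p (Measure.dirac y₀) ^ r ∂Q < ⊤}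

/-- The positive part of an extended real, valued in `ℝ≥0∞`. -/
def epos (e : EReal) : ℝ≥0∞ := if e = ⊤ then ⊤ else ENNReal.ofReal e.toReal

/-- Extended-real integral: positive part minus negative part (with value `⊥` when
both parts are infinite, i.e. when the integral is not well-defined). -/
def eInt {X : Type*} [MeasurableSpace X] (f : X → EReal) (μ : Measure X) : EReal :=
  ((∫⁻ x, epos (f x) ∂μ : ℝ≥0∞) : EReal) - ((∫⁻ x, epos (-(f x)) ∂μ : ℝ≥0∞) : EReal)

/-- Extended-real integral with the opposite (`⊤`) convention for ill-defined integrals. -/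
def eIntU {X : Type*} [MeasurableSpace X] (f : X → EReal) (μ : Measure X) : EReal :=
  -eInt (fun x => -(f x)) μ

/-- The extended-real integral is well-defined. -/
def eIntWellDef {X : Type*} [MeasurableSpace X] (f : X → EReal) (μ : Measure X) : Prop :=
  (∫⁻ x, epos (f x) ∂μ ≠ ⊤) ∨ (∫⁻ x, epos (-(f x)) ∂μ ≠ ⊤)

/-- Convergence in the `r`-Wasserstein distance. -/
def WrTendsto {Y : Type*} [MeasurableSpace Y] [PseudoMetricSpace Y]
    (r : ℝ) (ps : ℕ → Measure Y) (p : Measure Y) : Prop :=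
  Tendsto (fun n => Wr r (ps n) p) atTop (nhds 0)

/-- (Sequential) lower semicontinuity on `𝒫_r(Y)` w.r.t. `𝒲_r`. -/
def LscWr1 {Y : Type*} [MeasurableSpace Y] [PseudoMetricSpace Y]
    (r : ℝ) (y₀ : Y) (G : Measure Y → EReal) : Prop :=
  ∀ (p : Measure Y) (ps : ℕ → Measure Y), p ∈ Pr r y₀ → (∀ n, ps n ∈ Pr r y₀) →
    WrTendsto r ps p → G p ≤ liminf (fun n => G (ps n)) atTop

/-- (Sequential) upper semicontinuity on `𝒫_r(Y)` w.r.t. `𝒲_r`. -/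
def UscWr1 {Y : Type*} [MeasurableSpace Y] [PseudoMetricSpace Y]
    (r : ℝ) (y₀ : Y) (G : Measure Y → EReal) : Prop :=
  ∀ (p : Measure Y) (ps : ℕ → Measure Y), p ∈ Pr r y₀ → (∀ n, ps n ∈ Pr r y₀) →
    WrTendsto r ps p → limsup (fun n => G (ps n)) atTop ≤ G p

/-- (Sequential) lower semicontinuity on `X × 𝒫_r(Y)` w.r.t. `d_X × 𝒲_r`. -/
def LscWr {X Y : Type*} [TopologicalSpace X] [MeasurableSpace Y] [PseudoMetricSpace Y]
    (r : ℝ) (y₀ : Y) (C : X × Measure Y → EReal) : Prop :=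
  ∀ (x : X) (xs : ℕ → X) (p : Measure Y) (ps : ℕ → Measure Y),
    p ∈ Pr r y₀ → (∀ n, ps n ∈ Pr r y₀) → Tendsto xs atTop (nhds x) → WrTendsto r ps p →
    C (x, p) ≤ liminf (fun n => C (xs n, ps n)) atTop

/-- (Sequential) continuity of a real-valued cost on `X × 𝒫_r(Y)` w.r.t. `d_X × 𝒲_r`. -/
def ContWr {X Y : Type*} [TopologicalSpace X] [MeasurableSpace Y] [PseudoMetricSpace Y]
    (r : ℝ) (y₀ : Y) (C : X × Measure Y → ℝ) : Prop :=
  ∀ (x : X) (xs : ℕ → X) (p : Measure Y) (ps : ℕ → Measure Y),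
    p ∈ Pr r y₀ → (∀ n, ps n ∈ Pr r y₀) → Tendsto xs atTop (nhds x) → WrTendsto r ps p →
    Tendsto (fun n => C (xs n, ps n)) atTop (nhds (C (x, p)))

/-- Convexity of an extended-real-valued function on a set of measures. -/
def EConvexOn {Y : Type*} [MeasurableSpace Y] (S : Set (Measure Y)) (G : Measure Y → EReal) :
    Prop :=
  ∀ p ∈ S, ∀ q ∈ S, ∀ t : ℝ≥0, t ≤ 1 →
    G ((t : ℝ≥0∞) • p + ((1 - t : ℝ≥0) : ℝ≥0∞) • q)
      ≤ ((t : ℝ) : EReal) * G p + (((1 - t : ℝ≥0) : ℝ) : EReal) * G q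

/-- The lower semicontinuous convex envelope (on `𝒫_r(Y)` w.r.t. `𝒲_r`). -/
def cvxEnvWr {Y : Type*} [MeasurableSpace Y] [PseudoMetricSpace Y]
    (r : ℝ) (y₀ : Y) (f : Measure Y → EReal) : Measure Y → EReal :=
  fun p => ⨆ G ∈ {G : Measure Y → EReal |
    LscWr1 r y₀ G ∧ EConvexOn (Pr r y₀) G ∧ ∀ q ∈ Pr r y₀, G q ≤ f q}, G p

/-- The cost `C̃(x,p) = inf {∫ C(x,q) Q(dq) : Q ∈ 𝒫_r(𝒫_r(Y)), I(Q) = p}`. -/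
def tildeC {X Y : Type*} [MeasurableSpace X] [MeasurableSpace Y] [PseudoMetricSpace Y]
    (r : ℝ) (y₀ : Y) (C : X × Measure Y → EReal) : X × Measure Y → EReal :=
  fun xp => ⨅ Q ∈ {Q | Q ∈ PrP r y₀ ∧ intensity Q = xp.2}, eInt (fun q => C (xp.1, q)) Q

/-- The barycenter of a measure on a normed space. -/
def bary {E : Type*} [NormedAddCommGroup E] [NormedSpace ℝ E] [MeasurableSpace E]
    (p : Measure E) : E :=
  ∫ y, y ∂p

/-- Convex order of measures. -/
def ConvexOrder {E : Type*} [NormedAddCommGroup E] [NormedSpace ℝ E] [MeasurableSpace E]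
    (ν' ν : Measure E) : Prop :=
  ∀ θ : E → ℝ, ConvexOn ℝ Set.univ θ →
    eInt (fun y => ((θ y : ℝ) : EReal)) ν' ≤ eInt (fun y => ((θ y : ℝ) : EReal)) ν

/-- The inf-convolution `R_C ψ`. -/
def RC {X Y : Type*} [MeasurableSpace Y] [PseudoMetricSpace Y]
    (r : ℝ) (y₀ : Y) (C : X × Measure Y → EReal) (ψ : Y → ℝ) : X → EReal :=
  fun x => ⨅ p ∈ Pr r y₀, (((-∫ y, ψ y ∂p : ℝ) : EReal) + C (x, p))

/-- `κ` is a regular conditional distribution of `Yv` given the sub-σ-algebra `m1`. -/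
def IsRCD {Ω Y : Type*} [MeasurableSpace Y] (m1 : MeasurableSpace Ω)
    (mΩ : MeasurableSpace Ω) (P : @Measure Ω mΩ) (Yv : Ω → Y) (κ : Ω → Measure Y) : Prop :=
  (∀ ω, IsProbabilityMeasure (κ ω)) ∧ Measurable[m1] κ ∧
    ∀ A : Set Y, MeasurableSet A → ∀ B : Set Ω, MeasurableSet[m1] B →
      P (B ∩ Yv ⁻¹' A) = ∫⁻ ω in B, κ ω A ∂P

end WOT

open WOT

universe u v

section Helpers

variable {X Y : Type*} [MeasurableSpace X] [MeasurableSpace Y]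

lemma measurable_epos : Measurable epos := by
  unfold epos
  exact Measurable.ite (measurableSet_singleton _) measurable_const
    (ENNReal.measurable_ofReal.comp measurable_ereal_toReal)

lemma measurableSet_isProb : MeasurableSet {p : Measure Y | IsProbabilityMeasure p} := by
  have : {p : Measure Y | IsProbabilityMeasure p} = (fun p : Measure Y => p univ) ⁻¹' {1} := by
    ext p
    exact ⟨fun h => h.measure_univ, fun h => ⟨h⟩⟩
  rw [this]
  exact Measure.measurable_coe MeasurableSet.univ (measurableSet_singleton _)

open Classical in
/-- The evaluation kernel, corrected off the probability measures. -/
def evalK (X : Type*) [MeasurableSpace X] (y₀ : Y) : ProbabilityTheory.Kernel (X × Measure Y) Y where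
  toFun xp := if IsProbabilityMeasure xp.2 then xp.2 else Measure.dirac y₀
  measurable' := Measurable.ite (measurable_snd measurableSet_isProb) measurable_snd
    measurable_const

lemma evalK_of (y₀ : Y) (xp : X × Measure Y) (h : IsProbabilityMeasure xp.2) :
    evalK X y₀ xp = xp.2 := by
  exact if_pos h

instance evalK_markov (y₀ : Y) : ProbabilityTheory.IsMarkovKernel (evalK X y₀) := by
  constructor
  intro xp
  by_cases h : IsProbabilityMeasure xp.2
  · rw [evalK_of y₀ xp h]; exact h
  · have : evalK X y₀ xp = Measure.dirac y₀ := if_neg h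
    rw [this]; infer_instance

lemma intensityHat_apply (y₀ : Y) (P : Measure (X × Measure Y))
    (hP : ∀ᵐ xp ∂P, IsProbabilityMeasure xp.2) {s : Set (X × Y)} (hs : MeasurableSet s) :
    intensityHat P s = ∫⁻ xp, xp.2 (Prod.mk xp.1 ⁻¹' s) ∂P := by
  have h1 : (fun xp : X × Measure Y => (Measure.dirac xp.1).prod xp.2) =ᵐ[P]
      ((ProbabilityTheory.Kernel.deterministic Prod.fst measurable_fst).prod (evalK X y₀)) := by
    filter_upwards [hP] with xp hxp
    rw [ProbabilityTheory.Kernel.prod_apply, ProbabilityTheory.Kernel.deterministic_apply,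
      evalK_of y₀ xp hxp]
  unfold intensityHat
  rw [Measure.bind_apply hs ⟨_, ProbabilityTheory.Kernel.measurable _, h1⟩]
  refine lintegral_congr_ae ?_
  filter_upwards [hP] with xp hxp
  rw [Measure.dirac_prod, Measure.map_apply measurable_prodMk_left hs]

lemma intensityHat_fst (y₀ : Y) (P : Measure (X × Measure Y))
    (hP : ∀ᵐ xp ∂P, IsProbabilityMeasure xp.2) :
    (intensityHat P).map Prod.fst = P.map Prod.fst := by
  ext s hs
  rw [Measure.map_apply measurable_fst hs, Measure.map_apply measurable_fst hs,
    intensityHat_apply y₀ P hP (measurable_fst hs), ← lintegral_indicator_one (measurable_fst hs)]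
  refine lintegral_congr_ae ?_
  filter_upwards [hP] with xp hxp
  by_cases h : xp.1 ∈ s
  · have : Prod.mk xp.1 ⁻¹' (Prod.fst ⁻¹' s : Set (X × Y)) = univ := by ext; simp [h]
    rw [this, hxp.measure_univ, indicator_of_mem (by exact h)]; rfl
  · have : Prod.mk xp.1 ⁻¹' (Prod.fst ⁻¹' s : Set (X × Y)) = ∅ := by ext; simp [h]
    rw [this, measure_empty, indicator_of_notMem (by exact h)]

lemma intensityHat_snd (y₀ : Y) (P : Measure (X × Measure Y))
    (hP : ∀ᵐ xp ∂P, IsProbabilityMeasure xp.2) {s : Set Y} (hs : MeasurableSet s) :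
    (intensityHat P).map Prod.snd s = ∫⁻ xp, xp.2 s ∂P := by
  rw [Measure.map_apply measurable_snd hs, intensityHat_apply y₀ P hP (measurable_snd hs)]
  rfl

lemma part_one (μ : Measure X) (ν : Measure Y) (y₀ : Y)
    {Ω : Type*} {m1 m2 : MeasurableSpace Ω} (hm : m1 ≤ m2)
    (P : @Measure Ω m2) (hP : @IsProbabilityMeasure Ω m2 P)
    (Xv : Ω → X) (Yv : Ω → Y) (κ : Ω → Measure Y)
    (hX : Measurable[m1] Xv) (hY : Measurable[m2] Yv)
    (hXlaw : @Measure.map Ω X m2 _ Xv P = μ) (hYlaw : @Measure.map Ω Y m2 _ Yv P = ν)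
    (hκ : IsRCD m1 m2 P Yv κ) :
    (@Measure.map Ω (X × Measure Y) m2 _ (fun ω => (Xv ω, κ ω)) P ∈ Lambda μ ν ∧
      ∀ F : X × Measure Y → EReal, Measurable F →
        @eInt Ω m2 (fun ω => F (Xv ω, κ ω)) P
          = eInt F (@Measure.map Ω (X × Measure Y) m2 _ (fun ω => (Xv ω, κ ω)) P)) := by
  obtain ⟨hk1, hk2, hk3⟩ := hκ
  have hX2 : Measurable[m2] Xv := hX.mono hm le_rfl
  have hk2' : Measurable[m2] κ := hk2.mono hm le_rfl
  have hpair : Measurable[m2] (fun ω => (Xv ω, κ ω)) := hX2.prodMk hk2'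
  have hae : ∀ᵐ xp ∂(@Measure.map Ω (X × Measure Y) m2 _ (fun ω => (Xv ω, κ ω)) P),
      IsProbabilityMeasure xp.2 := by
    refine (ae_map_iff (p := fun xp : X × Measure Y => IsProbabilityMeasure xp.2)
      hpair.aemeasurable (measurable_snd measurableSet_isProb)).2 ?_
    exact Eventually.of_forall hk1
  refine ⟨⟨Measure.isProbabilityMeasure_map hpair.aemeasurable, hae, ?_, ?_⟩, ?_⟩
  · rw [intensityHat_fst y₀ _ hae, Measure.map_map measurable_fst hpair, ← hXlaw]
    rfl
  · ext s hs
    rw [intensityHat_snd y₀ _ hae hs,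
      lintegral_map (f := fun xp : X × Measure Y => xp.2 s)
        ((Measure.measurable_coe hs).comp measurable_snd) hpair, ← hYlaw,
      Measure.map_apply hY hs]
    have := hk3 s hs univ MeasurableSet.univ
    rw [univ_inter, Measure.restrict_univ] at this
    exact this.symm
  · intro F hF
    unfold eInt
    rw [lintegral_map (f := fun x => epos (F x)) (measurable_epos.comp hF) hpair,
      lintegral_map (f := fun x => epos (-(F x))) (measurable_epos.comp hF.neg) hpair]

lemma part_two (μ : Measure X) (ν : Measure Y) (y₀ : Y)
    (P' : Measure (X × Measure Y)) (hP' : P' ∈ Lambda μ ν) :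
    ∃ (m1' mΩ' : MeasurableSpace ((X × Measure Y) × Y)), m1' ≤ mΩ' ∧
      ∃ (Pm : @Measure ((X × Measure Y) × Y) mΩ') (Xv' : ((X × Measure Y) × Y) → X)
        (Yv' : ((X × Measure Y) × Y) → Y) (κ' : ((X × Measure Y) × Y) → Measure Y),
        @IsProbabilityMeasure _ mΩ' Pm ∧ Measurable[m1'] Xv' ∧ Measurable[mΩ'] Yv' ∧
        @Measure.map _ X mΩ' _ Xv' Pm = μ ∧ @Measure.map _ Y mΩ' _ Yv' Pm = ν ∧
        IsRCD m1' mΩ' Pm Yv' κ' ∧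
        @Measure.map _ (X × Measure Y) mΩ' _ (fun ω => (Xv' ω, κ' ω)) Pm = P' := by
  obtain ⟨hprob, hae, h1, h2⟩ := hP'
  have hfst : (P'.compProd (evalK X y₀)).map Prod.fst = P' := Measure.fst_compProd _ _
  have hkae : ∀ᵐ xp ∂P', evalK X y₀ xp = xp.2 := by
    filter_upwards [hae] with xp hxp using evalK_of y₀ xp hxp
  have hcm : Measurable[MeasurableSpace.comap (Prod.fst : (X × Measure Y) × Y → _) inferInstance]
      (Prod.fst : (X × Measure Y) × Y → X × Measure Y) := comap_measurable _
  refine ⟨MeasurableSpace.comap Prod.fst inferInstance, inferInstance,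
    measurable_fst.comap_le, P'.compProd (evalK X y₀), fun ω => ω.1.1, fun ω => ω.2,
    fun ω => evalK X y₀ ω.1, inferInstance, measurable_fst.comp hcm, measurable_snd, ?_, ?_,
    ⟨fun ω => inferInstance, (evalK X y₀).measurable.comp hcm, ?_⟩, ?_⟩
  · rw [← h1, intensityHat_fst y₀ P' hae]
    conv_rhs => rw [← hfst]
    rw [Measure.map_map measurable_fst measurable_fst]
    rfl
  · ext s hs
    rw [← h2, intensityHat_snd y₀ P' hae hs, Measure.map_apply measurable_snd hs,
      Measure.compProd_apply (measurable_snd hs)]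
    refine lintegral_congr_ae ?_
    filter_upwards [hkae] with xp hxp
    rw [hxp]
    rfl
  · rintro A hA _ ⟨B, hB, rfl⟩
    have : (Prod.fst ⁻¹' B ∩ (fun ω : (X × Measure Y) × Y => ω.2) ⁻¹' A) = B ×ˢ A := rfl
    rw [this, Measure.compProd_apply_prod hB hA]
    conv_lhs => rw [← hfst]
    rw [setLIntegral_map hB ((evalK X y₀).measurable_coe hA) measurable_fst]
  · have hg : Measurable (fun xp : X × Measure Y => (xp.1, evalK X y₀ xp)) :=
      measurable_fst.prodMk (evalK X y₀).measurable
    change Measure.map ((fun xp : X × Measure Y => (xp.1, evalK X y₀ xp)) ∘ Prod.fst) _ = _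
    rw [← Measure.map_map hg measurable_fst, hfst]
    conv_rhs => rw [← Measure.map_id (μ := P')]
    refine Measure.map_congr ?_
    filter_upwards [hkae] with xp hxp
    rw [hxp]
    rfl

end Helpers

/-- correspondence between one-step filtered processes and elements of `Λ(μ,ν)`
(Lemma `process vs Lambda`). -/
theorem statement3 {X : Type u} {Y : Type v}
    [MeasurableSpace X] [MetricSpace X] [CompleteSpace X] [SecondCountableTopology X]
    [BorelSpace X]
    [MeasurableSpace Y] [MetricSpace Y] [CompleteSpace Y] [SecondCountableTopology Y]
    [BorelSpace Y]
    (μ : Measure X) (ν : Measure Y) [IsProbabilityMeasure μ] [IsProbabilityMeasure ν]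
    -- part (i): data of a filtered probability space with a one-step process
    (Ω : Type (max u v)) (m1 m2 : MeasurableSpace Ω) (hm : m1 ≤ m2)
    (P : @Measure Ω m2) (hP : @IsProbabilityMeasure Ω m2 P)
    (Xv : Ω → X) (Yv : Ω → Y) (κ : Ω → Measure Y)
    (hX : Measurable[m1] Xv) (hY : Measurable[m2] Yv)
    (hXlaw : @Measure.map Ω X m2 _ Xv P = μ) (hYlaw : @Measure.map Ω Y m2 _ Yv P = ν)
    (hκ : IsRCD m1 m2 P Yv κ) :
    -- part (i): the law `P^𝕏` of `(X, ℒ(Y|ℱ₁))` belongs to `Λ(μ,ν)` and computes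
    -- expectations of all measurable functionals of `(X, ℒ(Y|ℱ₁))`
    (@Measure.map Ω (X × Measure Y) m2 _ (fun ω => (Xv ω, κ ω)) P ∈ Lambda μ ν ∧
      ∀ F : X × Measure Y → EReal, Measurable F →
        @eIntWellDef Ω m2 (fun ω => F (Xv ω, κ ω)) P →
        @eInt Ω m2 (fun ω => F (Xv ω, κ ω)) P
          = eInt F (@Measure.map Ω (X × Measure Y) m2 _ (fun ω => (Xv ω, κ ω)) P)) ∧
    -- part (ii): every `P' ∈ Λ(μ,ν)` arises this way
    (∀ P' ∈ Lambda μ ν, ∃ (Ω' : Type (max u v)) (m1' mΩ' : MeasurableSpace Ω'), m1' ≤ mΩ' ∧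
      ∃ (Pm : @Measure Ω' mΩ') (Xv' : Ω' → X) (Yv' : Ω' → Y) (κ' : Ω' → Measure Y),
        @IsProbabilityMeasure Ω' mΩ' Pm ∧ Measurable[m1'] Xv' ∧ Measurable[mΩ'] Yv' ∧
        @Measure.map Ω' X mΩ' _ Xv' Pm = μ ∧ @Measure.map Ω' Y mΩ' _ Yv' Pm = ν ∧
        IsRCD m1' mΩ' Pm Yv' κ' ∧
        @Measure.map Ω' (X × Measure Y) mΩ' _ (fun ω => (Xv' ω, κ' ω)) Pm = P') := by
  obtain ⟨y₀⟩ : Nonempty Y := nonempty_of_isProbabilityMeasure ν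
  obtain ⟨a, b⟩ := part_one μ ν y₀ hm P hP Xv Yv κ hX hY hXlaw hYlaw hκ
  exact ⟨⟨a, fun F hF _ => b F hF⟩, fun P' hP' => ⟨_, part_two μ ν y₀ P' hP'⟩⟩
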